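/- Let N ≥ 2, j = j_{N/2−1}, and define u : closed unit ball of ℝ^N → ℝ by u(x) = j |x|^{1−N/2} J_{N/2−1}(j|x|) / (N ω_N ∫_0^j r J²_{N/2−1}(r) dr)^{1/2} (extended by continuity at the origin). Then u extends to a C^∞ function on the closed unit ball B, u > 0 in B, u = 0 on ∂B, −Δu = j² u in B, ∫_B u² dx = 1, and the modulus of the gradient of u is constant on ∂B, equal to G_N = j² J'_{N/2−1}(j) / (N ω_N ∫_0^j r J²_{N/2−1}(r) dr)^{1/2} in absolute value. -/

import Mathlib

open MeasureTheory Metric Set Filter Topology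
open scoped RealInnerProductSpace

noncomputable section

abbrev euc (N : ℕ) := EuclideanSpace ℝ (Fin N)

/-- Bessel function of the first kind of order `ν`, via its power series. -/
def besselJ (ν : ℝ) (x : ℝ) : ℝ :=
  ∑' m : ℕ, ((-1 : ℝ) ^ m / (m.factorial * Real.Gamma (m + ν + 1))) *
    (x / 2) ^ (2 * (m : ℝ) + ν)

/-- First positive zero of the Bessel function `J_ν`. -/
def besselJzero (ν : ℝ) : ℝ := sInf {x : ℝ | 0 < x ∧ besselJ ν x = 0}

/-- Volume of the unit ball of `ℝ^N`. -/
def ballVol (N : ℕ) : ℝ := (volume (ball (0 : euc N) 1)).toReal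

/-- Perimeter: `(N-1)`-dimensional Hausdorff measure of the topological boundary. -/
def perim (N : ℕ) (Ω : Set (euc N)) : ℝ := (μH[(N : ℝ) - 1] (frontier Ω)).toReal

/-- First Dirichlet Laplacian eigenvalue: infimum of Rayleigh quotients over nonzero
smooth functions compactly supported in `Ω`. -/
def firstEigenvalue (N : ℕ) (Ω : Set (euc N)) : ℝ :=
  sInf { R : ℝ | ∃ u : euc N → ℝ, ContDiff ℝ (⊤ : ℕ∞) u ∧ HasCompactSupport u ∧
    tsupport u ⊆ Ω ∧ u ≠ 0 ∧
    R = (∫ x, ‖gradient u x‖ ^ 2) / (∫ x, u x ^ 2) }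

/-- Radius of the ball `Ω♯` with the same Lebesgue measure as `Ω`. -/
def sharpRadius (N : ℕ) (Ω : Set (euc N)) : ℝ :=
  ((volume Ω).toReal / ballVol N) ^ ((1 : ℝ) / N)

/-- Isoperimetric deficit `δP(Ω) = Per(Ω)/Per(Ω♯) - 1`. -/
def perDeficit (N : ℕ) (Ω : Set (euc N)) : ℝ :=
  perim N Ω / perim N (ball (0 : euc N) (sharpRadius N Ω)) - 1

/-- Faber-Krahn deficit `δλ(Ω) = λ(Ω)/λ(Ω♯) - 1`. -/
def fkDeficit (N : ℕ) (Ω : Set (euc N)) : ℝ :=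
  firstEigenvalue N Ω / firstEigenvalue N (ball (0 : euc N) (sharpRadius N Ω)) - 1

/-- A one-parameter family `Ω t` of subsets of `ℝ^N` smoothly converges to `Ω₀` as `t → 0`. -/
structure SmoothlyConverges (N : ℕ) (Ω : ℝ → Set (euc N)) (Ω₀ : Set (euc N)) where
  δ : ℝ
  δ_pos : 0 < δ
  Φ : ℝ → euc N → euc N
  Φinv : ℝ → euc N → euc N
  left_inv : ∀ t ∈ Ico (0 : ℝ) δ, Function.LeftInverse (Φinv t) (Φ t)
  right_inv : ∀ t ∈ Ico (0 : ℝ) δ, Function.RightInverse (Φinv t) (Φ t)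
  smooth_x : ∀ t ∈ Ico (0 : ℝ) δ, ContDiff ℝ (⊤ : ℕ∞) (Φ t)
  smooth_x_inv : ∀ t ∈ Ico (0 : ℝ) δ, ContDiff ℝ (⊤ : ℕ∞) (Φinv t)
  smooth_t : ∀ x, ContDiffOn ℝ (⊤ : ℕ∞) (fun t => Φ t x) (Ico (0 : ℝ) δ)
  smooth_t_inv : ∀ x, ContDiffOn ℝ (⊤ : ℕ∞) (fun t => Φinv t x) (Ico (0 : ℝ) δ)
  init : Ω 0 = Ω₀
  image : ∀ t ∈ Ico (0 : ℝ) δ, Ω t = Φ t '' Ω₀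

/-- The Laplacian of `f : ℝ^N → ℝ`, as the trace of the second derivative. -/
def lap (N : ℕ) (f : euc N → ℝ) (x : euc N) : ℝ :=
  ∑ i : Fin N,
    iteratedFDeriv ℝ 2 f x ![EuclideanSpace.single i 1, EuclideanSpace.single i 1]

/-- The divergence of a vector field on `ℝ^N`. -/
def diver (N : ℕ) (f : euc N → euc N) (x : euc N) : ℝ :=
  ∑ i : Fin N, ⟪fderiv ℝ f x (EuclideanSpace.single i 1), (EuclideanSpace.single i 1 : euc N)⟫

/-- The constant `G_N`: the modulus of the gradient on the boundary of the normalized first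
eigenfunction of the unit ball. -/
def GN (N : ℕ) : ℝ :=
  (besselJzero ((N : ℝ) / 2 - 1)) ^ 2 *
      deriv (besselJ ((N : ℝ) / 2 - 1)) (besselJzero ((N : ℝ) / 2 - 1)) /
    Real.sqrt (N * ballVol N *
      ∫ r in (0 : ℝ)..(besselJzero ((N : ℝ) / 2 - 1)), r * besselJ ((N : ℝ) / 2 - 1) r ^ 2)

/-- The optimal constant `C_N` of the paper. -/
def CN (N : ℕ) : ℝ :=
  (N * (N + 1) *
      ∫ r in (0 : ℝ)..(besselJzero ((N : ℝ) / 2 - 1)), r * besselJ ((N : ℝ) / 2 - 1) r ^ 2) /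
    (2 * (besselJzero ((N : ℝ) / 2 - 1) *
        deriv (besselJ ((N : ℝ) / 2 - 1)) (besselJzero ((N : ℝ) / 2 - 1))) ^ 2 *
      ((besselJzero ((N : ℝ) / 2 - 1)) ^ 2 - N))

end


/-- Coefficients of the entire series with `J_ν(x) = (x/2)^ν F_ν(x²)`. -/
noncomputable def bc (ν : ℝ) (m : ℕ) : ℝ :=
  (-1 : ℝ) ^ m / (4 ^ m * m.factorial * Real.Gamma (m + ν + 1))

noncomputable def bF (ν : ℝ) (t : ℝ) : ℝ := ∑' m : ℕ, bc ν m * t ^ m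

lemma gamma_lower (ν : ℝ) (hν : 0 ≤ ν) (m : ℕ) :
    Real.Gamma (ν + 1) ≤ Real.Gamma (m + ν + 1) := by
  induction m with
  | zero => simp
  | succ k ih =>
    have hpos : (0 : ℝ) < k + ν + 1 := by positivity
    have h : ((k + 1 : ℕ) : ℝ) + ν + 1 = (k + ν + 1) + 1 := by push_cast; ring
    rw [h, Real.Gamma_add_one hpos.ne']
    have hG : 0 < Real.Gamma (k + ν + 1) := Real.Gamma_pos_of_pos hpos
    have : (1 : ℝ) ≤ k + ν + 1 := by
      have : (0 : ℝ) ≤ k := by positivity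
      linarith
    nlinarith

lemma bc_abs_le (ν : ℝ) (hν : 0 ≤ ν) (m : ℕ) :
    |bc ν m| ≤ (Real.Gamma (ν + 1))⁻¹ * (m.factorial : ℝ)⁻¹ := by
  have hG : 0 < Real.Gamma (ν + 1) := Real.Gamma_pos_of_pos (by linarith)
  have hl := gamma_lower ν hν m
  have hG2 := hG.trans_le hl
  have hf : (0 : ℝ) < m.factorial := by exact_mod_cast m.factorial_pos
  have h4 : (1 : ℝ) ≤ 4 ^ m := one_le_pow₀ (by norm_num)
  unfold bc
  rw [abs_div, abs_pow, abs_neg, abs_one, one_pow, ← mul_inv, one_div,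
    abs_of_pos (by positivity)]
  apply inv_anti₀ (by positivity)
  calc Real.Gamma (ν + 1) * m.factorial ≤ Real.Gamma (m + ν + 1) * m.factorial := by gcongr
    _ = 1 * m.factorial * Real.Gamma (m + ν + 1) := by ring
    _ ≤ _ := by gcongr

lemma bF_summable (ν : ℝ) (hν : 0 ≤ ν) (t : ℝ) : Summable fun m : ℕ => bc ν m * t ^ m := by
  refine Summable.of_norm_bounded
    (g := fun m : ℕ => (Real.Gamma (ν + 1))⁻¹ * (|t| ^ m / m.factorial))
    ((Real.summable_pow_div_factorial |t|).mul_left _) ?_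
  intro m
  rw [Real.norm_eq_abs, abs_mul, abs_pow]
  calc |bc ν m| * |t| ^ m ≤ (Real.Gamma (ν + 1))⁻¹ * (m.factorial : ℝ)⁻¹ * |t| ^ m := by
        gcongr; exact bc_abs_le ν hν m
    _ = _ := by ring

lemma bc_succ (ν : ℝ) (m : ℕ) : bc ν (m + 1) * (m + 1) = -(1 / 4) * bc (ν + 1) m := by
  unfold bc
  have hf : (m.factorial : ℝ) ≠ 0 := by exact_mod_cast m.factorial_ne_zero
  have h : ((m + 1 : ℕ) : ℝ) + ν + 1 = m + (ν + 1) + 1 := by push_cast; ring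
  rw [h, Nat.factorial_succ]
  push_cast
  have h1 : (m : ℝ) + 1 ≠ 0 := by positivity
  by_cases hG : Real.Gamma (m + (ν + 1) + 1) = 0
  · simp [hG]
  · field_simp
    ring

lemma bc_step (ν : ℝ) (hν : 0 ≤ ν) (m : ℕ) : bc ν m = (m + ν + 1) * bc (ν + 1) m := by
  unfold bc
  have hf : (m.factorial : ℝ) ≠ 0 := by exact_mod_cast m.factorial_ne_zero
  have hpos : (0 : ℝ) < m + ν + 1 := by positivity
  have h : (m : ℝ) + (ν + 1) + 1 = (m + ν + 1) + 1 := by ring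
  have hG : Real.Gamma (m + ν + 1) ≠ 0 := (Real.Gamma_pos_of_pos hpos).ne'
  rw [h, Real.Gamma_add_one hpos.ne']
  field_simp

lemma bF_hasDerivAt (ν : ℝ) (hν : 0 ≤ ν) (t : ℝ) :
    HasDerivAt (bF ν) (-(1 / 4) * bF (ν + 1) t) t := by
  have hR : (0 : ℝ) < |t| + 1 := by positivity
  have key := hasDerivAt_tsum_of_isPreconnected (𝕜 := ℝ)
    (u := fun m : ℕ => (Real.Gamma (ν + 1))⁻¹ * ((m : ℝ) * (|t| + 1) ^ (m - 1) / m.factorial))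
    (g := fun (m : ℕ) (y : ℝ) => bc ν m * y ^ m)
    (g' := fun (m : ℕ) (y : ℝ) => bc ν m * (m * y ^ (m - 1)))
    (t := ball (0 : ℝ) (|t| + 1)) (y₀ := t) (y := t) ?_ isOpen_ball
    (convex_ball _ _).isPreconnected ?_ ?_ (by simp) (bF_summable ν hν t) (by simp)
  · have e : (∑' m : ℕ, bc ν m * (m * t ^ (m - 1))) = -(1 / 4) * bF (ν + 1) t := by
      have e2 : ∀ m : ℕ, bc ν (m + 1) * (((m + 1 : ℕ) : ℝ) * t ^ (m + 1 - 1))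
          = -(1 / 4) * (bc (ν + 1) m * t ^ m) := by
        intro m
        have := bc_succ ν m
        push_cast
        rw [← mul_assoc, this]; ring
      have hs : Summable fun m : ℕ => bc ν m * (m * t ^ (m - 1)) := by
        rw [← summable_nat_add_iff 1]
        simp_rw [e2]
        exact (bF_summable (ν + 1) (by linarith) t).mul_left _
      rw [hs.tsum_eq_zero_add]
      simp_rw [e2]
      rw [tsum_mul_left]
      simp [bF]
    rw [e] at key
    exact key
  · apply Summable.mul_left
    rw [← summable_nat_add_iff 1]
    refine (Real.summable_pow_div_factorial (|t| + 1)).congr ?_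
    intro m
    have hf : (m.factorial : ℝ) ≠ 0 := by exact_mod_cast m.factorial_ne_zero
    have h1 : (m : ℝ) + 1 ≠ 0 := by positivity
    rw [Nat.factorial_succ]
    push_cast
    field_simp
  · intro m y _
    exact (hasDerivAt_pow m y).const_mul _
  · intro m y hy
    have hy' : |y| ≤ |t| + 1 := by
      have := mem_ball_zero_iff.1 hy
      rw [Real.norm_eq_abs] at this
      exact this.le
    rw [Real.norm_eq_abs, abs_mul, abs_mul, abs_pow, Nat.abs_cast]
    calc |bc ν m| * (m * |y| ^ (m - 1))
        ≤ ((Real.Gamma (ν + 1))⁻¹ * (m.factorial : ℝ)⁻¹) * (m * (|t| + 1) ^ (m - 1)) := by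
          gcongr
          exact bc_abs_le ν hν m
      _ = _ := by ring

lemma bF_contDiff_nat (n : ℕ) : ∀ (ν : ℝ), 0 ≤ ν → ContDiff ℝ n (bF ν) := by
  induction n with
  | zero =>
    intro ν hν
    have : Continuous (bF ν) :=
      continuous_iff_continuousAt.2 fun t => (bF_hasDerivAt ν hν t).continuousAt
    exact_mod_cast contDiff_zero.2 this
  | succ k ih =>
    intro ν hν
    have hd : deriv (bF ν) = fun t => -(1 / 4) * bF (ν + 1) t :=
      funext fun t => (bF_hasDerivAt ν hν t).deriv
    push_cast
    rw [contDiff_succ_iff_deriv]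
    refine ⟨fun t => (bF_hasDerivAt ν hν t).differentiableAt, by simp, ?_⟩
    rw [hd]
    exact contDiff_const.mul (ih (ν + 1) (by linarith))

lemma bF_contDiff (ν : ℝ) (hν : 0 ≤ ν) : ContDiff ℝ (⊤ : ℕ∞) (bF ν) :=
  contDiff_infty.2 fun n => bF_contDiff_nat n ν hν

lemma bF_ode (ν : ℝ) (hν : 0 ≤ ν) (t : ℝ) :
    bF ν t = (ν + 1) * bF (ν + 1) t - t / 4 * bF (ν + 2) t := by
  have hs0 := bF_summable ν hν t
  have hs1 := bF_summable (ν + 1) (by linarith) t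
  have hs2 := bF_summable (ν + 2) (by linarith) t
  have hd : ∀ m : ℕ, bc ν m * t ^ m - (ν + 1) * (bc (ν + 1) m * t ^ m)
      = m * bc (ν + 1) m * t ^ m := by
    intro m; rw [bc_step ν hν m]; ring
  have hsd : Summable fun m : ℕ => (m : ℝ) * bc (ν + 1) m * t ^ m := by
    simp_rw [← hd]
    exact hs0.sub (hs1.mul_left _)
  have e : bF ν t - (ν + 1) * bF (ν + 1) t = ∑' m : ℕ, (m : ℝ) * bc (ν + 1) m * t ^ m := by
    unfold bF
    rw [← tsum_mul_left, ← hs0.tsum_sub (hs1.mul_left _)]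
    exact tsum_congr hd
  have e2 : ∀ m : ℕ, ((m + 1 : ℕ) : ℝ) * bc (ν + 1) (m + 1) * t ^ (m + 1)
      = -(t / 4) * (bc (ν + 2) m * t ^ m) := by
    intro m
    have := bc_succ (ν + 1) m
    have h2 : ν + 1 + 1 = ν + 2 := by ring
    rw [h2] at this
    push_cast
    rw [mul_comm ((m : ℝ) + 1), this]; ring
  rw [hsd.tsum_eq_zero_add] at e
  simp_rw [e2] at e
  rw [tsum_mul_left] at e
  simp only [Nat.cast_zero, zero_mul, zero_add] at e
  change _ = -(t / 4) * bF (ν + 2) t at e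
  linarith

lemma bF_zero (ν : ℝ) (hν : 0 ≤ ν) : 0 < bF ν 0 := by
  unfold bF
  rw [tsum_eq_single 0 (by intro m hm; simp [hm])]
  have : 0 < Real.Gamma (ν + 1) := Real.Gamma_pos_of_pos (by linarith)
  simp [bc, this]

/-- Existence of a positive zero. -/
lemma bF_exists_zero (ν : ℝ) (hν : 0 ≤ ν) : ∃ t, 0 < t ∧ bF ν t ≤ 0 := by
  by_contra! hpos
  set G := bF (ν + 1) with hG
  have hcF : Continuous (bF ν) := (bF_contDiff ν hν).continuous
  have hcG : Continuous G := (bF_contDiff (ν + 1) (by linarith)).continuous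
  have hdF := bF_hasDerivAt ν hν
  have hdG : ∀ t, HasDerivAt G (-(1 / 4) * bF (ν + 2) t) t := by
    intro t
    have := bF_hasDerivAt (ν + 1) (by linarith) t
    rwa [show ν + 1 + 1 = ν + 2 by ring] at this
  have hode := bF_ode ν hν
  -- p = t^(ν+1) G
  have hdp : ∀ t, 0 < t → HasDerivAt (fun t : ℝ => t ^ (ν + 1) * G t) (t ^ ν * bF ν t) t := by
    intro t ht
    have h1 := (Real.hasDerivAt_rpow_const (x := t) (p := ν + 1) (Or.inl ht.ne')).mul (hdG t)
    refine h1.congr_deriv ?_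
    rw [hode t, add_sub_cancel_right, Real.rpow_add_one ht.ne']
    ring
  have hcr : Continuous fun t : ℝ => t ^ (ν + 1) :=
    Real.continuous_rpow_const (by linarith)
  have hmono : StrictMonoOn (fun t : ℝ => t ^ (ν + 1) * G t) (Ici 0) := by
    apply strictMonoOn_of_deriv_pos (convex_Ici 0) (hcr.mul hcG).continuousOn
    intro t ht
    rw [interior_Ici] at ht
    refine lt_of_lt_of_eq ?_ (hdp t ht).deriv.symm
    exact mul_pos (Real.rpow_pos_of_pos ht _) (hpos t ht)
  have hGpos : ∀ t, 0 < t → 0 < G t := by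
    intro t ht
    have := hmono (mem_Ici.2 le_rfl) (mem_Ici.2 ht.le) ht
    simp only [Real.zero_rpow (by linarith : ν + 1 ≠ 0), zero_mul] at this
    exact pos_of_mul_pos_right this (Real.rpow_pos_of_pos ht _).le
  have hmono2 : StrictMonoOn
      (fun t : ℝ => (ν + 1) * (t ^ (ν + 1) * G t) - t ^ (ν + 1) * bF ν t) (Ici 0) := by
    apply strictMonoOn_of_deriv_pos (convex_Ici 0)
      ((continuous_const.mul (hcr.mul hcG)).sub (hcr.mul hcF)).continuousOn
    intro t ht
    rw [interior_Ici] at ht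
    have ht' : 0 < t := ht
    have h2 := ((hdp t ht).const_mul (ν + 1)).sub
      ((Real.hasDerivAt_rpow_const (x := t) (p := ν + 1) (Or.inl ht'.ne')).mul (hdF t))
    have h3 : deriv (fun t : ℝ => (ν + 1) * (t ^ (ν + 1) * G t) - t ^ (ν + 1) * bF ν t) t
      = t ^ (ν + 1) * (1 / 4 * G t) := by
      refine HasDerivAt.deriv ?_
      refine h2.congr_deriv ?_
      rw [add_sub_cancel_right]; ring
    refine lt_of_lt_of_eq ?_ h3.symm
    have := hGpos t ht'
    have := Real.rpow_pos_of_pos ht' (ν + 1)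
    positivity
  have hGF : ∀ t, 0 < t → bF ν t ≤ (ν + 1) * G t := by
    intro t ht
    have := hmono2 (mem_Ici.2 le_rfl) (mem_Ici.2 ht.le) ht
    simp only [Real.zero_rpow (by linarith : ν + 1 ≠ 0), zero_mul, mul_zero, sub_zero] at this
    have h3 : 0 < t ^ (ν + 1) * ((ν + 1) * G t - bF ν t) := by linarith
    have := pos_of_mul_pos_right h3 (Real.rpow_pos_of_pos ht _).le
    linarith
  -- q = F / G has derivative ≤ -1/8 for large t
  set T : ℝ := 8 * (ν + 1) ^ 2 with hT
  have hTpos : 0 < T := by positivity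
  have hdq : ∀ t, 0 < t → HasDerivAt (fun t => bF ν t / G t)
      ((-(1 / 4) * G t * G t - bF ν t * (-(1 / 4) * bF (ν + 2) t)) / G t ^ 2) t := by
    intro t ht
    exact (hdF t).div (hdG t) (hGpos t ht).ne'
  have hanti : AntitoneOn (fun t => bF ν t / G t + t / 8) (Ici T) := by
    have hdq2 : ∀ t, 0 < t → HasDerivAt (fun t => bF ν t / G t + t / 8)
      ((-(1 / 4) * G t * G t - bF ν t * (-(1 / 4) * bF (ν + 2) t)) / G t ^ 2 + 1 / 8) t := by
      intro t ht
      exact (hdq t ht).add ((hasDerivAt_id t).div_const 8)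
    apply antitoneOn_of_deriv_nonpos (convex_Ici T)
    · intro t ht
      exact (hdq2 t (hTpos.trans_le ht)).continuousAt.continuousWithinAt
    · intro t ht
      rw [interior_Ici] at ht
      exact (hdq2 t (hTpos.trans ht)).differentiableAt.differentiableWithinAt
    · intro t ht
      rw [interior_Ici] at ht
      have ht0 : 0 < t := hTpos.trans ht
      have htT : T < t := ht
      rw [(hdq2 t ht0).deriv]
      have hg := hGpos t ht0
      have hf := hpos t ht0
      have hfg := hGF t ht0
      have ho := hode t
      have : (-(1 / 4) * G t * G t - bF ν t * (-(1 / 4) * bF (ν + 2) t)) ≤ -(1 / 8) * G t ^ 2 := by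
        -- t/4 * H = (ν+1) G - F
        have h1 : t * (bF ν t * (1 / 4 * bF (ν + 2) t)) ≤ t * (1 / 8 * G t ^ 2) := by
          calc t * (bF ν t * (1 / 4 * bF (ν + 2) t))
              = bF ν t * ((ν + 1) * G t - bF ν t) := by
                rw [show (ν + 1) * G t - bF ν t = t / 4 * bF (ν + 2) t by linarith]; ring
            _ ≤ bF ν t * ((ν + 1) * G t) := by
                apply mul_le_mul_of_nonneg_left _ hf.le; linarith
            _ ≤ ((ν + 1) * G t) * ((ν + 1) * G t) := by
                apply mul_le_mul_of_nonneg_right hfg; positivity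
            _ = T / 8 * G t ^ 2 := by rw [hT]; ring
            _ ≤ t * (1 / 8 * G t ^ 2) := by
                have : 0 ≤ G t ^ 2 := by positivity
                nlinarith
        have := le_of_mul_le_mul_left h1 ht0
        nlinarith
      have h5 := (div_le_iff₀ (by positivity : 0 < G t ^ 2)).2 this
      linarith
  set q0 := bF ν T / G T with hq0
  have hq0pos : 0 < q0 := div_pos (hpos T hTpos) (hGpos T hTpos)
  have h6 := hanti (mem_Ici.2 le_rfl) (mem_Ici.2 (by linarith : T ≤ T + 8 * q0))
    (by linarith : T ≤ T + 8 * q0)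
  have h7 : 0 < bF ν (T + 8 * q0) / G (T + 8 * q0) :=
    div_pos (hpos _ (by linarith)) (hGpos _ (by linarith))
  simp only [← hq0] at h6
  linarith

lemma besselJ_eq (ν : ℝ) (x : ℝ) (hx : 0 < x) :
    besselJ ν x = (x / 2) ^ ν * bF ν (x ^ 2) := by
  unfold besselJ bF
  rw [← tsum_mul_left]
  refine tsum_congr fun m => ?_
  rw [Real.rpow_add (by positivity), show (2 * (m : ℝ)) = ((2 * m : ℕ) : ℝ) by push_cast; ring,
    Real.rpow_natCast, pow_mul, div_pow, div_pow]
  unfold bc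
  have h4 : (4 : ℝ) ^ m ≠ 0 := by positivity
  have hf : (m.factorial : ℝ) ≠ 0 := by exact_mod_cast m.factorial_ne_zero
  rw [show (2 : ℝ) ^ 2 = 4 by norm_num]
  by_cases hG : Real.Gamma (m + ν + 1) = 0
  · simp [hG]
  · field_simp

lemma besselJ_zero_iff (ν : ℝ) (x : ℝ) (hx : 0 < x) :
    besselJ ν x = 0 ↔ bF ν (x ^ 2) = 0 := by
  rw [besselJ_eq ν x hx]
  have : (x / 2) ^ ν ≠ 0 := (Real.rpow_pos_of_pos (by positivity) _).ne'
  simp [this]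

lemma besselJzero_spec (ν : ℝ) (hν : 0 ≤ ν) :
    0 < besselJzero ν ∧ bF ν (besselJzero ν ^ 2) = 0 ∧
      ∀ x, 0 ≤ x → x < besselJzero ν → 0 < bF ν (x ^ 2) := by
  have hc : Continuous fun x : ℝ => bF ν (x ^ 2) :=
    (bF_contDiff ν hν).continuous.comp (continuous_pow 2)
  have h0 : 0 < bF ν ((0 : ℝ) ^ 2) := by simpa using bF_zero ν hν
  have hS : {x : ℝ | 0 < x ∧ besselJ ν x = 0} = Ici 0 ∩ {x | bF ν (x ^ 2) = 0} := by
    ext x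
    simp only [mem_ofPred_eq, mem_inter_iff, mem_Ici]
    constructor
    · rintro ⟨h, h'⟩
      exact ⟨h.le, (besselJ_zero_iff ν x h).1 h'⟩
    · rintro ⟨h, h'⟩
      have hx : 0 < x := by
        rcases h.eq_or_lt with h | h
        · rw [← h] at h'; exact absurd h' h0.ne'
        · exact h
      exact ⟨hx, (besselJ_zero_iff ν x hx).2 h'⟩
  have hivt : ∀ y, 0 ≤ y → bF ν (y ^ 2) ≤ 0 → ∃ x, 0 ≤ x ∧ x ≤ y ∧ bF ν (x ^ 2) = 0 := by
    intro y hy hy2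
    obtain ⟨x, hx, hx2⟩ := intermediate_value_Icc' hy hc.continuousOn ⟨hy2, h0.le⟩
    exact ⟨x, hx.1, hx.2, hx2⟩
  have hclosed : IsClosed (Ici 0 ∩ {x : ℝ | bF ν (x ^ 2) = 0}) :=
    isClosed_Ici.inter (isClosed_eq hc continuous_const)
  have hbdd : BddBelow (Ici 0 ∩ {x : ℝ | bF ν (x ^ 2) = 0}) := ⟨0, fun x hx => hx.1⟩
  have hne : (Ici 0 ∩ {x : ℝ | bF ν (x ^ 2) = 0}).Nonempty := by
    obtain ⟨t, ht, ht2⟩ := bF_exists_zero ν hν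
    obtain ⟨x, hx, _, hx2⟩ := hivt (Real.sqrt t) (Real.sqrt_nonneg _) (by rwa [Real.sq_sqrt ht.le])
    exact ⟨x, hx, hx2⟩
  have hmem := hclosed.csInf_mem hne hbdd
  rw [← hS] at hmem
  refine ⟨hmem.1, (besselJ_zero_iff ν _ hmem.1).1 hmem.2, ?_⟩
  intro x hx hxj
  by_contra! hneg
  obtain ⟨y, hy, hyx, hy2⟩ := hivt x hx hneg
  have : besselJzero ν ≤ y := by
    unfold besselJzero
    rw [hS]
    exact csInf_le hbdd ⟨hy, hy2⟩
  linarith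

/-! ### The eigenfunction -/

lemma hasFDerivAt_radial (N : ℕ) (a K : ℝ) (f f' : ℝ → ℝ) (hf : ∀ t, HasDerivAt f (f' t) t)
    (x : euc N) :
    HasFDerivAt (fun x : euc N => K * f (a * ‖x‖ ^ 2))
      ((2 * K * a * f' (a * ‖x‖ ^ 2)) • innerSL ℝ x) x := by
  have h1 : HasFDerivAt (fun x : euc N => ‖x‖ ^ 2) (2 • innerSL ℝ x) x :=
    (hasStrictFDerivAt_norm_sq x).hasFDerivAt
  have h2 := ((hf (a * ‖x‖ ^ 2)).comp_hasFDerivAt x (h1.const_mul a)).const_mul K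
  refine h2.congr_fderiv ?_
  ext v
  simp
  ring

lemma lap_radial (N : ℕ) (a K : ℝ) (f f' f'' : ℝ → ℝ) (hf : ∀ t, HasDerivAt f (f' t) t)
    (hf' : ∀ t, HasDerivAt f' (f'' t) t) (x : euc N) :
    lap N (fun x : euc N => K * f (a * ‖x‖ ^ 2)) x
      = K * a * (2 * N * f' (a * ‖x‖ ^ 2) + 4 * (a * ‖x‖ ^ 2) * f'' (a * ‖x‖ ^ 2)) := by
  let L : euc N →L[ℝ] euc N →L[ℝ] ℝ :=
    (isBoundedBilinearMap_inner (𝕜 := ℝ) (E := euc N)).toContinuousLinearMap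
  have hL : ∀ x y, L x y = inner ℝ x y := fun _ _ => rfl
  have h1 : fderiv ℝ (fun x : euc N => K * f (a * ‖x‖ ^ 2))
      = fun x => (2 * K * a * f' (a * ‖x‖ ^ 2)) • L x :=
    funext fun x => (hasFDerivAt_radial N a K f f' hf x).fderiv
  have h2 : HasFDerivAt (fun x : euc N => (2 * K * a * f' (a * ‖x‖ ^ 2)) • L x)
      ((2 * K * a * f' (a * ‖x‖ ^ 2)) • L +
        ((2 * (2 * K * a) * a * f'' (a * ‖x‖ ^ 2)) • L x).smulRight (L x)) x := by
    exact (hasFDerivAt_radial N a (2 * K * a) f' f'' hf' x).smul L.hasFDerivAt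
  unfold lap
  simp_rw [iteratedFDeriv_two_apply]
  rw [h1, h2.fderiv]
  have h3 : ∀ i : Fin N, (((2 * K * a * f' (a * ‖x‖ ^ 2)) • L +
        ((2 * (2 * K * a) * a * f'' (a * ‖x‖ ^ 2)) • L x).smulRight (L x) :
          euc N →L[ℝ] euc N →L[ℝ] ℝ) (EuclideanSpace.single i 1)) (EuclideanSpace.single i 1)
      = 2 * K * a * f' (a * ‖x‖ ^ 2) + 2 * (2 * K * a) * a * f'' (a * ‖x‖ ^ 2) * x i ^ 2 := by
    intro i
    simp [hL, EuclideanSpace.inner_single_right]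
    ring
  have h4 : ∑ i : Fin N, x i ^ 2 = ‖x‖ ^ 2 := by
    rw [EuclideanSpace.norm_sq_eq]; simp
  simp only [Matrix.cons_val_zero, Matrix.cons_val_one]
  rw [Finset.sum_congr rfl fun i _ => h3 i, Finset.sum_add_distrib, ← Finset.mul_sum,
    ← Finset.mul_sum, h4]
  simp
  ring

lemma norm_gradient_radial (N : ℕ) (a K : ℝ) (f f' : ℝ → ℝ) (hf : ∀ t, HasDerivAt f (f' t) t)
    (x : euc N) (hx : ‖x‖ = 1) :
    ‖gradient (fun x : euc N => K * f (a * ‖x‖ ^ 2)) x‖ = |2 * K * a * f' a| := by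
  unfold gradient
  rw [LinearIsometryEquiv.norm_map, (hasFDerivAt_radial N a K f f' hf x).fderiv, norm_smul,
    innerSL_apply_norm, hx]
  simp

lemma integral_ball_radial (N : ℕ) (hN : 2 ≤ N) (f : ℝ → ℝ) :
    ∫ x in ball (0 : euc N) 1, f ‖x‖
      = N * ballVol N * ∫ r in (0 : ℝ)..1, r ^ (N - 1) * f r := by
  have : Nonempty (Fin N) := ⟨⟨0, by omega⟩⟩
  have h1 : ∫ x in ball (0 : euc N) 1, f ‖x‖
      = ∫ x : euc N, (Iio (1 : ℝ)).indicator f ‖x‖ := by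
    rw [← integral_indicator measurableSet_ball]
    congr 1
    ext x
    by_cases h : ‖x‖ < 1
    · simp [h]
    · simp [h]
  rw [h1, integral_fun_norm_addHaar (μ := (volume : Measure (euc N)))]
  rw [finrank_euclideanSpace_fin, nsmul_eq_mul, smul_eq_mul, ← mul_assoc]
  congr 1
  have h2 : ∀ y : ℝ, y ^ (N - 1) • (Iio (1 : ℝ)).indicator f y
      = (Iio (1 : ℝ)).indicator (fun r => r ^ (N - 1) * f r) y := by
    intro y
    by_cases h : y < 1
    · simp [h]
    · simp [h]
  simp_rw [h2]
  rw [setIntegral_indicator measurableSet_Iio, intervalIntegral.integral_of_le zero_le_one,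
    Ioi_inter_Iio, integral_Ioc_eq_integral_Ioo]

lemma bessel_integral (N : ℕ) (hN : 2 ≤ N) (j : ℝ) (hj : 0 < j) :
    ∫ r in (0 : ℝ)..j, r * besselJ ((N : ℝ) / 2 - 1) r ^ 2
      = (j * (j / 2) ^ ((N : ℝ) / 2 - 1)) ^ 2 *
        ∫ r in (0 : ℝ)..1, r ^ (N - 1) * bF ((N : ℝ) / 2 - 1) (j ^ 2 * r ^ 2) ^ 2 := by
  set ν : ℝ := (N : ℝ) / 2 - 1 with hν
  have h1 := intervalIntegral.mul_integral_comp_mul_left (a := 0) (b := 1)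
    (f := fun r => r * besselJ ν r ^ 2) (c := j)
  rw [mul_zero, mul_one] at h1
  rw [← h1, ← intervalIntegral.integral_const_mul, ← intervalIntegral.integral_const_mul]
  refine intervalIntegral.integral_congr_ae (Eventually.of_forall ?_)
  intro r hr
  rw [uIoc_of_le zero_le_one] at hr
  have hr0 : 0 < r := hr.1
  rw [besselJ_eq ν _ (by positivity), show j * r / 2 = j / 2 * r by ring,
    Real.mul_rpow (by positivity) hr0.le, mul_pow j r 2]
  have h2 : r ^ (N - 1) = r * (r ^ ν) ^ 2 := by
    rw [← Real.rpow_natCast (r ^ ν) 2, ← Real.rpow_mul hr0.le, ← Real.rpow_natCast r (N - 1)]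
    rw [mul_comm r, ← Real.rpow_add_one hr0.ne', Nat.cast_sub (by omega)]
    congr 1
    rw [hν]; push_cast; ring
  rw [h2]
  ring

/-- **The normalized first eigenfunction of the unit ball.**
The function `u(x) = j‖x‖^{1-N/2} J_{N/2-1}(j‖x‖)/(Nω_N ∫₀^j r J²_{N/2-1}(r) dr)^{1/2}`,
extended by continuity at the origin, is `C^∞` on the closed unit ball, positive inside,
vanishes on the boundary, satisfies `-Δu = j²u` with unit `L²` norm, and the modulus of its
gradient is constant on `∂B`, equal to `|G_N|`. -/
theorem unit_ball_first_eigenfunction (N : ℕ) (hN : 2 ≤ N) :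
    ∃ U : euc N → ℝ,
      ContDiffOn ℝ (⊤ : ℕ∞) U (closedBall (0 : euc N) 1) ∧
      (∀ x : euc N, x ≠ 0 → ‖x‖ ≤ 1 →
        U x = besselJzero ((N : ℝ) / 2 - 1) * ‖x‖ ^ ((1 : ℝ) - N / 2) *
            besselJ ((N : ℝ) / 2 - 1) (besselJzero ((N : ℝ) / 2 - 1) * ‖x‖) /
          Real.sqrt (N * ballVol N *
            ∫ r in (0 : ℝ)..(besselJzero ((N : ℝ) / 2 - 1)),
              r * besselJ ((N : ℝ) / 2 - 1) r ^ 2)) ∧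
      (∀ x ∈ ball (0 : euc N) 1, 0 < U x) ∧
      (∀ x ∈ sphere (0 : euc N) 1, U x = 0) ∧
      (∀ x ∈ ball (0 : euc N) 1, -lap N U x = besselJzero ((N : ℝ) / 2 - 1) ^ 2 * U x) ∧
      (∫ x in ball (0 : euc N) 1, U x ^ 2 = 1) ∧
      (∀ x ∈ sphere (0 : euc N) 1, ‖gradient U x‖ = |GN N|) := by
  have hν : (0 : ℝ) ≤ (N : ℝ) / 2 - 1 := by
    have : (2 : ℝ) ≤ N := by exact_mod_cast hN
    linarith
  have hGN : GN N = (besselJzero ((N : ℝ) / 2 - 1)) ^ 2 *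
      deriv (besselJ ((N : ℝ) / 2 - 1)) (besselJzero ((N : ℝ) / 2 - 1)) /
    Real.sqrt (N * ballVol N *
      ∫ r in (0 : ℝ)..(besselJzero ((N : ℝ) / 2 - 1)),
        r * besselJ ((N : ℝ) / 2 - 1) r ^ 2) := rfl
  obtain ⟨hj, hj0, hjpos⟩ := besselJzero_spec _ hν
  have hI := bessel_integral N hN _ hj
  set ν : ℝ := (N : ℝ) / 2 - 1 with hνdef
  set j := besselJzero ν with hjdef
  rw [hI] at hGN ⊢
  set P := (j / 2) ^ ν with hP
  have hPpos : 0 < P := Real.rpow_pos_of_pos (by positivity) _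
  set I := ∫ r in (0 : ℝ)..1, r ^ (N - 1) * bF ν (j ^ 2 * r ^ 2) ^ 2 with hIdef
  have hcF : Continuous (bF ν) := (bF_contDiff ν hν).continuous
  have hIpos : 0 < I := by
    apply intervalIntegral.intervalIntegral_pos_of_pos_on
    · apply Continuous.intervalIntegrable
      fun_prop
    · intro r hr
      have h1 := hr.1
      have : 0 < bF ν (j ^ 2 * r ^ 2) := by
        rw [← mul_pow]
        apply hjpos
        · positivity
        · nlinarith [hr.2]
      positivity
    · exact zero_lt_one
  have hvol : 0 < ballVol N :=
    ENNReal.toReal_pos (measure_ball_pos volume _ one_pos).ne' measure_ball_lt_top.ne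
  have hN0 : (0 : ℝ) < N := by exact_mod_cast (by omega : 0 < N)
  set D := Real.sqrt (N * ballVol N * ((j * P) ^ 2 * I)) with hD
  have hDpos : 0 < D := Real.sqrt_pos.2 (by positivity)
  have hD2 : D ^ 2 = N * ballVol N * ((j * P) ^ 2 * I) := Real.sq_sqrt (by positivity)
  set K := j * P / D with hK
  have hKpos : 0 < K := by positivity
  have hd1 := bF_hasDerivAt ν hν
  have hd2 : ∀ t, HasDerivAt (fun t => -(1 / 4) * bF (ν + 1) t) (1 / 16 * bF (ν + 2) t) t := by
    intro t
    have := (bF_hasDerivAt (ν + 1) (by linarith) t).const_mul (-(1 / 4))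
    rw [show ν + 1 + 1 = ν + 2 by ring] at this
    exact this.congr_deriv (by ring)
  refine ⟨fun x => K * bF ν (j ^ 2 * ‖x‖ ^ 2), ?_, ?_, ?_, ?_, ?_, ?_, ?_⟩
  · refine ContDiff.contDiffOn ?_
    exact contDiff_const.mul ((bF_contDiff ν hν).comp (contDiff_const.mul (contDiff_norm_sq ℝ)))
  · intro x hx _
    have hx0 : 0 < ‖x‖ := norm_pos_iff.2 hx
    rw [besselJ_eq ν _ (by positivity), show j * ‖x‖ / 2 = j / 2 * ‖x‖ by ring,
      Real.mul_rpow (by positivity) hx0.le, mul_pow j ‖x‖ 2, ← hP,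
      show (1 : ℝ) - N / 2 = -ν by rw [hνdef]; ring, Real.rpow_neg hx0.le]
    have : ‖x‖ ^ ν ≠ 0 := (Real.rpow_pos_of_pos hx0 _).ne'
    rw [hK]
    field_simp
  · intro x hx
    rw [mem_ball_zero_iff] at hx
    refine mul_pos hKpos ?_
    rw [← mul_pow]
    apply hjpos
    · positivity
    · nlinarith
  · intro x hx
    rw [mem_sphere_zero_iff_norm] at hx
    simp [hx, hj0]
  · intro x _
    rw [lap_radial N (j ^ 2) K _ _ _ hd1 hd2 x]
    have ho := bF_ode ν hν (j ^ 2 * ‖x‖ ^ 2)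
    have hn : (N : ℝ) = 2 * (ν + 1) := by rw [hνdef]; ring
    beta_reduce
    rw [ho, hn]
    ring
  · rw [integral_ball_radial N hN (fun r => (K * bF ν (j ^ 2 * r ^ 2)) ^ 2)]
    have h1 : ∫ r in (0 : ℝ)..1, r ^ (N - 1) * (K * bF ν (j ^ 2 * r ^ 2)) ^ 2 = K ^ 2 * I := by
      rw [hIdef, ← intervalIntegral.integral_const_mul]
      refine intervalIntegral.integral_congr fun r _ => ?_
      beta_reduce
      ring
    rw [h1, hK, div_pow, hD2]
    field_simp
  · intro x hx
    rw [mem_sphere_zero_iff_norm] at hx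
    rw [norm_gradient_radial N (j ^ 2) K _ _ hd1 x hx, hGN]
    have h1 : HasDerivAt (besselJ ν) (P * (-(1 / 4) * bF (ν + 1) (j ^ 2) * (2 * j))) j := by
      have e : besselJ ν =ᶠ[𝓝 j] fun x => (x / 2) ^ ν * bF ν (x ^ 2) := by
        filter_upwards [lt_mem_nhds hj] with y hy
        exact besselJ_eq ν y hy
      refine HasDerivAt.congr_of_eventuallyEq ?_ e
      have h2 : HasDerivAt (fun x : ℝ => x ^ 2) (2 * j) j := by
        simpa using hasDerivAt_pow 2 j
      have h3 := HasDerivAt.comp j (hd1 (j ^ 2)) h2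
      have h4 := ((hasDerivAt_id j).div_const 2).rpow_const (p := ν)
        (Or.inl (by simpa using hj.ne'))
      have h5 := h4.mul h3
      refine h5.congr_deriv ?_
      simp only [Function.comp, hj0, mul_zero, zero_add, id]
      rw [← hP]
    rw [h1.deriv, hK]
    congr 1
    ring
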